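/- Let L be a finite-dimensional real Lie algebra whose Killing form is negative definite, and let C be a Cartan subalgebra of L. Then there exists a regular element a of L such that C is contained in the image of ad(a), i.e. every c ∈ C can be written c = ⁅a, y⁆ for some y ∈ L. -/

import Mathlib

/-!
The form `⟪x, y⟫ = -κ(x, y)` is an invariant inner product on `L`, so every `ad x` is skew-adjoint
and `(ker (ad x))ᗮ = range (ad x)`.

Let `C` be maximal abelian. Rotating a root plane of `C` by a half turn is an inner automorphism
that acts on `C` as the reflection along the root. As in a Coxeter element, the product `g` of the
reflections along a basis of roots fixes no nonzero element of `C`, so that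
`C ≤ range (g - 1) = (ker (g - 1))ᗮ`.

On the other hand, every inner automorphism `g` fixes pointwise the centralizer of some regular
element `a`, whence `C ≤ (ker (ad a))ᗮ = range (ad a)`. To find `a`, take a maximal abelian subspace
`A` of `ker (g - 1)` and perturb `g` to `exp (-ad b) * g` with `b ∈ A` small and generic: the fixed
space becomes `A`. The fixed space of any inner automorphism has dimension at least the rank, since
this is true near `1` and propagates along an analytic path, whereas by Hunt's argument an abelian
subspace has dimension at most the rank. Hence `A` is the centralizer of a regular element.
-/

open Module Filter Topology NormedSpace RealInnerProductSpace

-- Mathlib states `exp` over normed `ℚ`-algebras, and this structure is not inferred from `ℝ`.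
noncomputable local instance {E : Type*} [NormedAddCommGroup E] [NormedSpace ℝ E] :
    NormedAlgebra ℚ (E →L[ℝ] E) :=
  NormedAlgebra.restrictScalars ℚ ℝ _

section Exponential

variable {E : Type*} [NormedAddCommGroup E] [NormedSpace ℝ E] [CompleteSpace E]

theorem eq_exp_smul_apply_of_hasDerivAt {T : E →L[ℝ] E} {f : ℝ → E}
    (hf : ∀ t, HasDerivAt f (T (f t)) t) (t : ℝ) : f t = exp (t • T) (f 0) := by
  have hderiv (s : ℝ) : HasDerivAt (fun s : ℝ ↦ exp (s • -T) (f s)) 0 s := by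
    convert! (hasDerivAt_exp_smul_const (-T) s).clm_apply (hf s) using 1
    simp
  have hconst : exp (t • -T) (f t) = f 0 := by
    simpa using is_const_of_deriv_eq_zero (fun s ↦ (hderiv s).differentiableAt)
      (fun s ↦ (hderiv s).deriv) t 0
  have hcancel : exp (t • T) * exp (t • -T) = 1 := by
    rw [← exp_add_of_commute (by simp), smul_neg, add_neg_cancel, exp_zero]
  rw [← hconst, ← mul_apply_eq_comp, hcancel, one_apply_eq_self]

theorem exp_apply_eq_self {T : E →L[ℝ] E} {x : E} (hx : T x = 0) : exp T x = x := by
  have h := eq_exp_smul_apply_of_hasDerivAt (T := T) (f := fun _ ↦ x)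
    (fun t ↦ by simpa [hx] using hasDerivAt_const t x) 1
  simpa using h.symm

-- On the plane spanned by `x` and `T x` the flow `exp (t • T)` is the rotation of angle `k * t`.
theorem exp_pi_div_smul_apply_eq_neg {T : E →L[ℝ] E} {x : E} {k : ℝ} (hk : k ≠ 0)
    (hx : T (T x) = -(k ^ 2) • x) : exp ((Real.pi / k) • T) x = -x := by
  have hflow (t : ℝ) : HasDerivAt
      (fun t ↦ Real.cos (k * t) • x + (Real.sin (k * t) / k) • T x)
      (T (Real.cos (k * t) • x + (Real.sin (k * t) / k) • T x)) t := by
    have hkt : HasDerivAt (fun t : ℝ ↦ k * t) k t := by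
      simpa using (hasDerivAt_id t).const_mul k
    convert! (hkt.cos.smul_const x).add ((hkt.sin.div_const k).smul_const (T x)) using 1
    rw [map_add, map_smul, map_smul, hx]
    match_scalars <;> field_simp
  have h := eq_exp_smul_apply_of_hasDerivAt hflow (Real.pi / k)
  simpa [mul_div_cancel₀ _ hk] using h.symm

theorem eventually_apply_eq_zero_of_exp_apply_eq_self :
    ∀ᶠ T : E →L[ℝ] E in 𝓝 0, ∀ x, exp T x = x → T x = 0 := by
  have hnear : ∀ᶠ T : E →L[ℝ] E in 𝓝 0, ‖exp T - 1‖ < 1 / 2 :=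
    (exp_continuous.sub continuous_const).norm.continuousAt.eventually_lt
      continuousAt_const (by simp [exp_zero])
  obtain ⟨ε, hε, hball⟩ := Metric.eventually_nhds_iff_ball.1 hnear
  filter_upwards [Metric.ball_mem_nhds _ hε] with T hT x hx
  have hderiv (t : ℝ) : HasDerivAt (fun t : ℝ ↦ exp (t • T) x - t • T x)
      ((exp (t • T) - 1) (T x)) t := by
    convert! ((hasDerivAt_exp_smul_const T t).clm_apply (hasDerivAt_const t x)).sub
      ((hasDerivAt_id t).smul_const (T x)) using 1
    simp
  have hbound : ∀ t ∈ Set.Ico (0 : ℝ) 1, ‖(exp (t • T) - 1) (T x)‖ ≤ 1 / 2 * ‖T x‖ := by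
    intro t ht
    have htT : t • T ∈ Metric.ball (0 : E →L[ℝ] E) ε :=
      (convex_ball 0 ε).smul_mem_of_zero_mem (Metric.mem_ball_self hε) hT ⟨ht.1, ht.2.le⟩
    exact (exp (t • T) - 1).le_of_opNorm_le (hball _ htT).le (T x)
  have hmean := norm_image_sub_le_of_norm_deriv_le_segment_01'
    (fun t _ ↦ (hderiv t).hasDerivWithinAt) hbound
  have hhalf : ‖T x‖ ≤ 1 / 2 * ‖T x‖ := by simpa [hx, exp_zero] using hmean
  exact norm_le_zero_iff.1 (by linarith)

theorem exists_pos_apply_eq_zero_of_flow_one_eq : ∃ ε > 0, ∀ T : E →L[ℝ] E,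
    (∀ x, ‖T x‖ ≤ ε * ‖x‖) → ∀ f : ℝ → E, (∀ t, HasDerivAt f (T (f t)) t) → f 1 = f 0 →
      T (f 0) = 0 := by
  obtain ⟨ε, hε, h⟩ := Metric.eventually_nhds_iff_ball.1
    (eventually_apply_eq_zero_of_exp_apply_eq_self (E := E))
  refine ⟨ε / 2, half_pos hε, fun T hT f hf hf1 ↦ h T ?_ _ ?_⟩
  · rw [mem_ball_zero_iff]
    exact (T.opNorm_le_bound (half_pos hε).le hT).trans_lt (half_lt_self hε)
  · simpa [hf1] using (eq_exp_smul_apply_of_hasDerivAt hf 1).symm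

end Exponential

section LinearAlgebra

variable {K V : Type*} [Field K] [AddCommGroup V] [Module K V] [FiniteDimensional K V]

theorem exists_linearEquiv_eqOn_of_disjoint_ker {f : V →ₗ[K] V} {W : Submodule K V}
    (hW : Disjoint W f.ker) : ∃ e : V ≃ₗ[K] V, ∀ x ∈ W, e x = f x := by
  have hinj : Function.Injective (f.domRestrict W) := by
    rw [← LinearMap.ker_eq_bot, LinearMap.ker_domRestrict]
    exact Submodule.disjoint_iff_comap_eq_bot.1 hW
  obtain ⟨e, he⟩ := Submodule.exists_linearEquiv_restrict_eq
    (LinearEquiv.ofInjective (f.domRestrict W) hinj)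
  exact ⟨e, fun x hx ↦ (he ⟨x, hx⟩).symm⟩

theorem exists_isUnit_add_of_finrank_range_le (f : V →ₗ[K] V) :
    ∃ b : V →ₗ[K] V, finrank K b.range ≤ finrank K f.ker ∧ IsUnit (f + b) := by
  obtain ⟨W, hW⟩ := f.ker.exists_isCompl
  obtain ⟨e, he⟩ := exists_linearEquiv_eqOn_of_disjoint_ker hW.disjoint.symm
  refine ⟨e - f, ?_, ?_⟩
  · have hWb : W ≤ (e.toLinearMap - f).ker := fun x hx ↦ by simp [he x hx]
    have := Submodule.finrank_mono hWb
    have := (e.toLinearMap - f).finrank_range_add_finrank_ker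
    have := Submodule.finrank_add_eq_of_isCompl hW
    lia
  · rw [add_sub_cancel, LinearMap.isUnit_iff_ker_eq_bot]
    exact e.ker

theorem finrank_ker_le_finrank_range_of_isUnit_add {f b : V →ₗ[K] V} (h : IsUnit (f + b)) :
    finrank K f.ker ≤ finrank K b.range := by
  have hdisj : Disjoint f.ker b.ker := Submodule.disjoint_def.2 fun x hf hb ↦ by
    have hx : x ∈ (f + b).ker := by
      rw [LinearMap.mem_ker, LinearMap.add_apply, hf, hb, add_zero]
    rwa [(LinearMap.isUnit_iff_ker_eq_bot _).1 h, Submodule.mem_bot] at hx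
  have := Submodule.finrank_add_finrank_le_of_disjoint hdisj
  have := b.finrank_range_add_finrank_ker
  lia

end LinearAlgebra

section Analytic

theorem analyticAt_det {𝕜 E : Type*} [NontriviallyNormedField 𝕜] [CompleteSpace 𝕜]
    [NormedAddCommGroup E] [NormedSpace 𝕜 E] [FiniteDimensional 𝕜 E] (T : E →L[𝕜] E) :
    AnalyticAt 𝕜 ContinuousLinearMap.det T := by
  classical
  let b := Module.finBasis 𝕜 E
  have hentry (i j) : AnalyticAt 𝕜
      (fun S : E →L[𝕜] E ↦ LinearMap.toMatrix b b S.toLinearMap i j) T := by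
    simp only [LinearMap.toMatrix_apply]
    exact ((b.coord i).toContinuousLinearMap ∘L ContinuousLinearMap.apply 𝕜 E (b j)).analyticAt T
  have hdet : ContinuousLinearMap.det =
      fun S : E →L[𝕜] E ↦ (LinearMap.toMatrix b b S.toLinearMap).det := by
    ext S
    rw [LinearMap.det_toMatrix]
  simp only [hdet, Matrix.det_apply, Units.smul_def, zsmul_eq_mul]
  exact Finset.analyticAt_fun_sum _ fun σ _ ↦
    analyticAt_const.mul (Finset.analyticAt_fun_prod _ fun i _ ↦ hentry _ _)

theorem eventually_ker_add_le_of_isCompl {𝕜 E : Type*} [NontriviallyNormedField 𝕜]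
    [CompleteSpace 𝕜] [NormedAddCommGroup E] [NormedSpace 𝕜 E] [FiniteDimensional 𝕜 E]
    {T : E →L[𝕜] E} (hT : IsCompl T.ker T.range) :
    ∀ᶠ S : E →L[𝕜] E in 𝓝 0, Commute T S → (T + S).ker ≤ T.ker ⊓ S.ker := by
  have := FiniteDimensional.complete 𝕜 E
  obtain ⟨e, he⟩ := exists_linearEquiv_eqOn_of_disjoint_ker hT.disjoint.symm
  set e' : E →L[𝕜] E := e.toLinearMap.toContinuousLinearMap
  have he' : IsUnit e' := ContinuousLinearMap.isUnit_iff_bijective.2 e.bijective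
  have hunit : ∀ᶠ S : E →L[𝕜] E in 𝓝 0, IsUnit (e' + S) :=
    ((continuous_const.add continuous_id).tendsto' 0 e' (add_zero e')).eventually
      (Units.isOpen.mem_nhds he')
  filter_upwards [hunit] with S hS hcomm x hx
  have hTS (y : E) : T (S y) = S (T y) := congr($hcomm.eq y)
  obtain ⟨y, hy, z, ⟨w, hw⟩, rfl⟩ : ∃ y ∈ T.ker, ∃ z ∈ T.range, y + z = x :=
    Submodule.mem_sup.1 (hT.sup_eq_top ▸ Submodule.mem_top)
  have hy : T y = 0 := hy
  have hz : z = T w := hw.symm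
  have hsum : (T z + S z) + S y = 0 := by
    simpa [hy, add_comm, add_left_comm, add_assoc] using hx
  have hker : T (T z + S z) = 0 := by
    have := congr(T $hsum)
    rwa [map_add, hTS, hy, map_zero, add_zero, map_zero] at this
  have hrange : T z + S z ∈ T.range := ⟨z + S w, by simp [hz, hTS]⟩
  have hTSz : T z + S z = 0 := Submodule.disjoint_def.1 hT.disjoint _ hker hrange
  have hz : z = 0 := by
    refine (ContinuousLinearMap.isUnit_iff_bijective.1 hS).injective ?_
    rw [map_zero, _root_.add_apply, ← hTSz]
    exact congr($(he z ⟨w, hw⟩) + S z)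
  have hSy : S y = 0 := by rwa [hTSz, zero_add] at hsum
  simpa [hz] using ⟨hy, hSy⟩

variable {E : Type*} [NormedAddCommGroup E] [NormedSpace ℝ E] [FiniteDimensional ℝ E]

-- Perturb `T t₁` by an operator of rank `finrank (ker (T t₁))` to make it invertible; the
-- determinant of `T t` perturbed in the same way is then an analytic function that is not
-- identically zero.
theorem le_finrank_ker_of_analytic_of_eventually_le {T : ℝ → E →L[ℝ] E} {r : ℕ} {t₀ : ℝ}
    (hT : ∀ t, AnalyticAt ℝ T t) (hr : ∀ᶠ t in 𝓝 t₀, r ≤ finrank ℝ (T t).ker) (t₁ : ℝ) :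
    r ≤ finrank ℝ (T t₁).ker := by
  obtain ⟨b, hb, hunit⟩ := exists_isUnit_add_of_finrank_range_le (T t₁).toLinearMap
  by_contra! hlt
  set d : ℝ → ℝ := fun t ↦ (T t + b.toContinuousLinearMap).det
  have hd : AnalyticOnNhd ℝ d Set.univ := fun t _ ↦
    (analyticAt_det _).comp ((hT t).add analyticAt_const)
  have hzero : ∀ᶠ t in 𝓝 t₀, d t = 0 := by
    filter_upwards [hr] with t ht
    by_contra hne
    have hle := finrank_ker_le_finrank_range_of_isUnit_add
      ((LinearMap.isUnit_iff_isUnit_det ((T t).toLinearMap + b)).2 (isUnit_iff_ne_zero.2 hne))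
    exact (ht.trans (hle.trans hb)).not_gt hlt
  exact ((LinearMap.isUnit_iff_isUnit_det _).1 hunit).ne_zero
    (hd.eqOn_zero_of_preconnected_of_eventuallyEq_zero isPreconnected_univ (Set.mem_univ t₀)
      hzero (Set.mem_univ t₁))

end Analytic

section Euclidean

variable {E : Type*} [NormedAddCommGroup E] [InnerProductSpace ℝ E]

theorem reflection_orthogonal_singleton_apply (h x : E) :
    (ℝ ∙ h)ᗮ.reflection x = x - (2 * (⟪h, x⟫ / ‖h‖ ^ 2)) • h := by
  rw [Submodule.reflection_orthogonal_apply, Submodule.reflection_singleton_apply]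
  module

theorem eq_and_inner_eq_zero_of_reflection_eq {W : Submodule ℝ E} {h x c : E} (hh : h ∉ W)
    (hxc : x - c ∈ W) (hx : (ℝ ∙ h)ᗮ.reflection x = c) : x = c ∧ ⟪h, x⟫ = 0 := by
  have hh0 : h ≠ 0 := fun h0 ↦ hh (h0 ▸ W.zero_mem)
  have hcoeff : 2 * (⟪h, x⟫ / ‖h‖ ^ 2) = 0 := by
    rw [← hx, reflection_orthogonal_singleton_apply, sub_sub_cancel] at hxc
    by_contra hne
    exact hh ((W.smul_mem_iff hne).1 hxc)
  have hinner : ⟪h, x⟫ = 0 := by simpa [hh0] using hcoeff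
  exact ⟨by rw [← hx, reflection_orthogonal_singleton_apply, hcoeff, zero_smul, sub_zero], hinner⟩

-- Compose the reflections along a basis of `span s` extracted from `s` (a Coxeter element).
theorem exists_mem_forall_sub_mem_span {M : Submonoid (E →L[ℝ] E)} {C : Submodule ℝ E}
    {s : Set E} (hs : s.Finite) (hsC : s ⊆ C)
    (hM : ∀ h ∈ s, ∃ r ∈ M, ∀ c ∈ C, r c = (ℝ ∙ h)ᗮ.reflection c) :
    ∃ g ∈ M, ∀ c ∈ C,
      g c - c ∈ Submodule.span ℝ s ∧ (g c = c → c ∈ (Submodule.span ℝ s)ᗮ) := by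
  induction s, hs using Set.Finite.induction_on with
  | empty => exact ⟨1, M.one_mem, by simp⟩
  | @insert h s _ _ ih =>
    have hsC' := Set.insert_subset_iff.1 hsC
    obtain ⟨g, hgM, hg⟩ := ih hsC'.2 fun k hk ↦ hM k (Set.mem_insert_of_mem _ hk)
    by_cases hh : h ∈ Submodule.span ℝ s
    · rw [Submodule.span_insert_eq_span hh]
      exact ⟨g, hgM, hg⟩
    obtain ⟨r, hrM, hr⟩ := hM h (Set.mem_insert _ _)
    refine ⟨r * g, M.mul_mem hrM hgM, fun c hc ↦ ?_⟩
    have hgC : g c ∈ C := by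
      simpa using C.add_mem (Submodule.span_le.2 hsC'.2 (hg c hc).1) hc
    rw [mul_apply_eq_comp, hr _ hgC, Submodule.span_insert, ← Submodule.inf_orthogonal]
    constructor
    · rw [reflection_orthogonal_singleton_apply, sub_right_comm, sub_eq_neg_add]
      exact Submodule.add_mem_sup (neg_mem (Submodule.smul_mem _ _
        (Submodule.mem_span_singleton_self h))) (hg c hc).1
    · intro hfix
      obtain ⟨hgc, hinner⟩ := eq_and_inner_eq_zero_of_reflection_eq hh (hg c hc).1 hfix
      rw [hgc] at hinner
      exact ⟨Submodule.mem_orthogonal_singleton_iff_inner_right.2 hinner, (hg c hc).2 hgc⟩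

variable [FiniteDimensional ℝ E]

theorem exists_mem_le_range_sub_one {M : Submonoid (E →L[ℝ] E)} {C : Submodule ℝ E}
    {S : Set E} (hSC : S ⊆ C) (hM : ∀ h ∈ S, ∃ r ∈ M, ∀ c ∈ C, r c = (ℝ ∙ h)ᗮ.reflection c)
    (hS : ∀ c ∈ C, c ≠ 0 → ∃ h ∈ S, ⟪h, c⟫ ≠ 0) : ∃ g ∈ M, C ≤ (g - 1 : E →L[ℝ] E).range := by
  obtain ⟨s, hsS, hspan, hs⟩ := exists_linearIndependent ℝ S
  obtain ⟨g, hgM, hg⟩ := exists_mem_forall_sub_mem_span (LinearIndependent.setFinite hs)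
    (hsS.trans hSC) fun h hh ↦ hM h (hsS hh)
  rw [hspan] at hg
  have hmaps : ∀ c ∈ C, (g - 1) c ∈ C := fun c hc ↦ Submodule.span_le.2 hSC (hg c hc).1
  have hinj : Function.Injective ((g - 1).toLinearMap.restrict hmaps) := by
    refine (injective_iff_map_eq_zero _).2 fun ⟨c, hc⟩ hfix ↦ ?_
    have hfix : g c = c := sub_eq_zero.1 congr(($hfix : E))
    by_contra hne
    obtain ⟨h, hh, hhc⟩ := hS c hc fun h0 ↦ hne (Subtype.ext h0)
    exact hhc ((hg c hc).2 hfix h (Submodule.subset_span hh))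
  refine ⟨g, hgM, fun c hc ↦ ?_⟩
  obtain ⟨y, hy⟩ := LinearMap.injective_iff_surjective.1 hinj ⟨c, hc⟩
  exact ⟨y, congr(($hy : E))⟩

end Euclidean

section StarNormal

theorem isStarNormal_sub_one {R : Type*} [NonAssocRing R] [StarRing R] {a : R}
    (ha : IsStarNormal a) : IsStarNormal (a - 1) :=
  neg_sub 1 a ▸ (IsStarNormal.one_sub (ha := ha)).neg

variable {E : Type*} [NormedAddCommGroup E] [InnerProductSpace ℝ E] [FiniteDimensional ℝ E]

theorem orthogonal_ker_of_isStarNormal {T : E →L[ℝ] E} (hT : IsStarNormal T) :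
    T.kerᗮ = T.range := by
  rw [← ContinuousLinearMap.IsStarNormal.orthogonal_range hT, Submodule.orthogonal_orthogonal]

theorem isCompl_ker_range_of_isStarNormal {T : E →L[ℝ] E} (hT : IsStarNormal T) :
    IsCompl T.ker T.range := by
  rw [← orthogonal_ker_of_isStarNormal hT]
  exact T.ker.isCompl_orthogonal

end StarNormal

section Derivation

variable {E : Type*} [NormedAddCommGroup E] [NormedSpace ℝ E]

/-- The infinitesimal action of an operator `D` on continuous bilinear products on `E`; the
product `B` is killed by it iff `D` is a derivation of `B`. -/
noncomputable def bilinAction (D : E →L[ℝ] E) :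
    (E →L[ℝ] E →L[ℝ] E) →L[ℝ] (E →L[ℝ] E →L[ℝ] E) :=
  ContinuousLinearMap.compL ℝ E (E →L[ℝ] E) (E →L[ℝ] E)
      (ContinuousLinearMap.compL ℝ E E E D - (ContinuousLinearMap.compL ℝ E E E).flip D) -
    (ContinuousLinearMap.compL ℝ E E (E →L[ℝ] E)).flip D

theorem bilinAction_apply (D : E →L[ℝ] E) (B : E →L[ℝ] E →L[ℝ] E) (x y : E) :
    bilinAction D B x y = D (B x y) - B x (D y) - B (D x) y := rfl

theorem norm_bilinAction_apply_le (D : E →L[ℝ] E) (B : E →L[ℝ] E →L[ℝ] E) :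
    ‖bilinAction D B‖ ≤ 3 * ‖D‖ * ‖B‖ := by
  refine ContinuousLinearMap.opNorm_le_bound₂ _ (by positivity) fun x y ↦ ?_
  have houter : ‖D (B x y)‖ ≤ ‖D‖ * (‖B‖ * ‖x‖ * ‖y‖) := D.le_opNorm_of_le (B.le_opNorm₂ x y)
  have hright : ‖B x (D y)‖ ≤ ‖B‖ * ‖x‖ * (‖D‖ * ‖y‖) :=
    B.le_of_opNorm₂_le_of_le le_rfl le_rfl (D.le_opNorm y)
  have hleft : ‖B (D x) y‖ ≤ ‖B‖ * (‖D‖ * ‖x‖) * ‖y‖ :=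
    B.le_of_opNorm₂_le_of_le le_rfl (D.le_opNorm x) le_rfl
  have h := norm_sub_le_of_le (norm_sub_le_of_le houter hright) hleft
  rw [bilinAction_apply]
  linarith

variable [CompleteSpace E]

theorem exp_apply_apply_of_derivation {D : E →L[ℝ] E} {B : E →L[ℝ] E →L[ℝ] E}
    (hD : ∀ x y, D (B x y) = B x (D y) + B (D x) y) (x y : E) :
    exp D (B x y) = B (exp D x) (exp D y) := by
  have hflow (z : E) (t : ℝ) : HasDerivAt (fun t : ℝ ↦ exp (t • D) z) (D (exp (t • D) z)) t := by
    simpa using (hasDerivAt_exp_smul_const' D t).clm_apply (hasDerivAt_const t z)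
  have hB (t : ℝ) : HasDerivAt (fun t : ℝ ↦ B (exp (t • D) x) (exp (t • D) y))
      (D (B (exp (t • D) x) (exp (t • D) y))) t := by
    rw [hD]
    exact B.hasDerivAt_of_bilinear (fun _ ↦ hflow x t) (fun _ ↦ hflow y t)
  simpa [exp_zero] using (eq_exp_smul_apply_of_hasDerivAt hB 1).symm

theorem exists_flow_bilinAction (D : E →L[ℝ] E) (B : E →L[ℝ] E →L[ℝ] E) :
    ∃ f : ℝ → E →L[ℝ] E →L[ℝ] E, (∀ t, HasDerivAt f (bilinAction D (f t)) t) ∧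
    ∀ t x y, f t x y = exp (t • D) (B (exp (t • -D) x) (exp (t • -D) y)) := by
  refine ⟨fun t ↦ ContinuousLinearMap.compL ℝ E E E (exp (t • D)) ∘L
    (ContinuousLinearMap.compL ℝ E E E).flip (exp (t • -D)) ∘L B ∘L exp (t • -D),
    fun t ↦ ?_, fun _ _ _ ↦ rfl⟩
  have hU := hasDerivAt_exp_smul_const' D t
  have hV := hasDerivAt_exp_smul_const (-D) t
  convert! ((ContinuousLinearMap.compL ℝ E E E).hasFDerivAt.comp_hasDerivAt t hU).clm_comp
    (((ContinuousLinearMap.compL ℝ E E E).flip.hasFDerivAt.comp_hasDerivAt t hV).clm_comp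
      ((hasDerivAt_const t B).clm_comp hV)) using 1
  ext x y
  simp [bilinAction_apply, sub_eq_add_neg]
  abel

theorem exp_apply_exp_neg_apply (D : E →L[ℝ] E) (x : E) : exp D (exp (-D) x) = x := by
  rw [← mul_apply_eq_comp, ← exp_add_of_commute (by simp), add_neg_cancel, exp_zero,
    one_apply_eq_self]

theorem eventually_derivation_of_exp_apply_apply (B : E →L[ℝ] E →L[ℝ] E) :
    ∀ᶠ D : E →L[ℝ] E in 𝓝 0, (∀ x y, exp D (B x y) = B (exp D x) (exp D y)) →
      ∀ x y, D (B x y) = B x (D y) + B (D x) y := by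
  obtain ⟨ε, hε, h⟩ := exists_pos_apply_eq_zero_of_flow_one_eq (E := E →L[ℝ] E →L[ℝ] E)
  filter_upwards [Metric.ball_mem_nhds _ (show 0 < ε / 3 by positivity)] with D hD hexp x y
  obtain ⟨f, hflow, hf⟩ := exists_flow_bilinAction D B
  have hf0 : f 0 = B := by ext; simp [hf, exp_zero]
  have hf1 : f 1 = f 0 := by
    ext x y
    simp [hf, hf0, hexp, exp_apply_exp_neg_apply]
  have hsmall (X : E →L[ℝ] E →L[ℝ] E) : ‖bilinAction D X‖ ≤ ε * ‖X‖ := by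
    refine (norm_bilinAction_apply_le D X).trans ?_
    rw [mem_ball_zero_iff] at hD
    gcongr
    linarith
  have hzero := congr($(h _ hsmall f hflow hf1) x y)
  rw [hf0, bilinAction_apply] at hzero
  rw [← sub_eq_zero, ← sub_sub]
  exact hzero

end Derivation

section MaximalAbelian

variable {R L : Type*} [CommRing R] [LieRing L] [LieAlgebra R L]

/-- `A` is a maximal abelian subspace of `V`, encoded as being its own centralizer in `V`. -/
structure IsMaximalAbelianIn (A V : Submodule R L) : Prop where
  le : A ≤ V
  mem_iff : ∀ x ∈ V, x ∈ A ↔ ∀ a ∈ A, ⁅a, x⁆ = 0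

theorem IsMaximalAbelianIn.lie_eq_zero {A V : Submodule R L} (hA : IsMaximalAbelianIn A V) :
    ∀ x ∈ A, ∀ y ∈ A, ⁅x, y⁆ = 0 :=
  fun x hx y hy ↦ (hA.mem_iff y (hA.le hy)).1 hy x hx

theorem exists_isMaximalAbelianIn [IsNoetherian R L] {A₀ V : Submodule R L} (hle : A₀ ≤ V)
    (hA₀ : ∀ x ∈ A₀, ∀ y ∈ A₀, ⁅x, y⁆ = 0) : ∃ A, A₀ ≤ A ∧ IsMaximalAbelianIn A V := by
  obtain ⟨A, ⟨h₀, hV, hA⟩, hmax⟩ := WellFounded.has_min (wellFounded_gt (α := Submodule R L))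
    {A : Submodule R L | A₀ ≤ A ∧ A ≤ V ∧ ∀ x ∈ A, ∀ y ∈ A, ⁅x, y⁆ = 0} ⟨A₀, le_rfl, hle, hA₀⟩
  refine ⟨A, h₀, hV, fun x hx ↦ ⟨fun hxA a ha ↦ hA a ha x hxA, fun hcomm ↦ ?_⟩⟩
  by_contra hxA
  refine hmax (A ⊔ R ∙ x) ⟨h₀.trans le_sup_left,
    sup_le hV ((Submodule.span_singleton_le_iff_mem _ _).2 hx), ?_⟩ ?_
  · simp only [Submodule.mem_sup, Submodule.mem_span_singleton]
    rintro _ ⟨a, ha, _, ⟨s, rfl⟩, rfl⟩ _ ⟨b, hb, _, ⟨t, rfl⟩, rfl⟩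
    have hxb : ⁅x, b⁆ = 0 := by rw [← lie_skew, hcomm b hb, neg_zero]
    simp [hA a ha b hb, hcomm a ha, hxb]
  · exact left_lt_sup.2 fun h ↦ hxA (h (Submodule.mem_span_singleton_self x))

end MaximalAbelian

/-- A real Lie algebra is compact semisimple if its Killing form is negative definite. -/
class IsCompactSemisimple (L : Type*) [LieRing L] [LieAlgebra ℝ L] : Prop where
  killingForm_self_neg : ∀ x : L, x ≠ 0 → killingForm ℝ L x x < 0

namespace IsCompactSemisimple

section InnerProduct

variable (L : Type*) [LieRing L] [LieAlgebra ℝ L] [IsCompactSemisimple L]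

/-- The inner product `⟪x, y⟫ = -κ(x, y)` on a compact semisimple Lie algebra. -/
noncomputable abbrev innerCore : InnerProductSpace.Core ℝ L where
  inner x y := -killingForm ℝ L x y
  conj_inner_symm x y := by simp [LieModule.traceForm_comm ℝ L L y x]
  re_inner_nonneg x := by
    rcases eq_or_ne x 0 with rfl | hx
    · simp
    · simpa using (killingForm_self_neg x hx).le
  add_left x y z := by simp [add_comm]
  smul_left x y r := by simp
  definite x hx := by
    by_contra h
    exact (neg_pos.2 (killingForm_self_neg x h)).ne' hx

noncomputable scoped instance : NormedAddCommGroup L := (innerCore L).toNormedAddCommGroup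

noncomputable scoped instance : InnerProductSpace ℝ L :=
  InnerProductSpace.ofCore (innerCore L).toCore

instance [FiniteDimensional ℝ L] : LieAlgebra.IsKilling ℝ L where
  killingCompl_top_eq_bot := by
    refine (LieSubmodule.eq_bot_iff _).2 fun x hx ↦ ?_
    by_contra h
    exact (killingForm_self_neg x h).ne ((LieIdeal.mem_killingCompl ℝ L ⊤).1 hx x trivial)

end InnerProduct

variable {L : Type*} [LieRing L] [LieAlgebra ℝ L] [IsCompactSemisimple L]

theorem inner_lie_left (x y z : L) : inner ℝ ⁅x, y⁆ z = -inner ℝ y ⁅x, z⁆ := by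
  change -killingForm ℝ L ⁅x, y⁆ z = - -killingForm ℝ L y ⁅x, z⁆
  rw [← lie_skew, map_neg, LinearMap.neg_apply]
  exact congrArg _ (congrArg Neg.neg (LieModule.traceForm_apply_lie_apply ℝ L L y x z))

theorem lie_eq_zero_of_lie_lie_eq_zero {x y : L} (h : ⁅x, ⁅x, y⁆⁆ = 0) : ⁅x, y⁆ = 0 := by
  rw [← inner_self_eq_zero (𝕜 := ℝ), inner_lie_left, h, inner_zero_right, neg_zero]

theorem mem_engel_iff_lie_eq_zero {x y : L} : y ∈ LieSubalgebra.engel ℝ x ↔ ⁅x, y⁆ = 0 := by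
  rw [LieSubalgebra.mem_engel_iff]
  constructor
  · rintro ⟨n, hn⟩
    induction n generalizing y with
    | zero => simp_all
    | succ n ih =>
      rw [pow_succ] at hn
      exact lie_eq_zero_of_lie_lie_eq_zero (ih (y := ⁅x, y⁆) hn)
  · exact fun h ↦ ⟨1, by simpa using h⟩

section FiniteDimensional

variable [FiniteDimensional ℝ L]

instance : CompleteSpace L := FiniteDimensional.complete ℝ L

variable (L) in
/-- The adjoint representation as a continuous bilinear product. -/
noncomputable def adCLM : L →L[ℝ] L →L[ℝ] L :=
  LinearMap.toContinuousBilinearMap (LieModule.toEnd ℝ L L : L →ₗ[ℝ] L →ₗ[ℝ] L)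

@[simp] theorem adCLM_apply (x y : L) : adCLM L x y = ⁅x, y⁆ := rfl

theorem adCLM_mem_skewAdjoint (x : L) : adCLM L x ∈ skewAdjoint (L →L[ℝ] L) := by
  rw [skewAdjoint.mem_iff]
  refine ContinuousLinearMap.ext fun y ↦ ext_inner_right ℝ fun z ↦ ?_
  rw [ContinuousLinearMap.star_eq_adjoint, ContinuousLinearMap.adjoint_inner_left]
  simp only [_root_.neg_apply, adCLM_apply, inner_neg_left, inner_lie_left, neg_neg]

theorem orthogonal_ker_adCLM (x : L) : (adCLM L x).kerᗮ = (adCLM L x).range :=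
  orthogonal_ker_of_isStarNormal (skewAdjoint.isStarNormal_of_mem (adCLM_mem_skewAdjoint x))

theorem isCompl_ker_range_adCLM (x : L) : IsCompl (adCLM L x).ker (adCLM L x).range :=
  isCompl_ker_range_of_isStarNormal (skewAdjoint.isStarNormal_of_mem (adCLM_mem_skewAdjoint x))

variable (L) in
/-- The monoid of automorphisms of `L` as a Lie algebra with an inner product, encoded as
continuous endomorphisms. -/
noncomputable def isometricAut : Submonoid (L →L[ℝ] L) where
  carrier := {g | g ∈ unitary (L →L[ℝ] L) ∧ ∀ x y, g ⁅x, y⁆ = ⁅g x, g y⁆}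
  one_mem' := ⟨one_mem _, fun _ _ ↦ rfl⟩
  mul_mem' hg hh := ⟨mul_mem hg.1 hh.1, fun x y ↦ by simp [hh.2, hg.2]⟩

theorem isCompact_isometricAut : IsCompact (isometricAut L : Set (L →L[ℝ] L)) := by
  have hclosed : IsClosed {g : L →L[ℝ] L | ∀ x y, g (adCLM L x y) = adCLM L (g x) (g y)} := by
    simp only [Set.ofPred_forall]
    exact isClosed_iInter fun x ↦ isClosed_iInter fun y ↦
      isClosed_eq (by fun_prop) (by fun_prop)
  refine Metric.isCompact_of_isClosed_isBounded (isClosed_unitary.inter hclosed) ?_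
  refine (Metric.isBounded_closedBall (x := 0) (r := 1)).subset fun g hg ↦ ?_
  rw [mem_closedBall_zero_iff]
  exact g.opNorm_le_bound zero_le_one fun x ↦ by
    rw [ContinuousLinearMap.norm_map_of_mem_unitary hg.1, one_mul]

theorem exp_adCLM_mem_isometricAut (x : L) : exp (adCLM L x) ∈ isometricAut L :=
  ⟨exp_mem_unitary_of_mem_skewAdjoint (adCLM_mem_skewAdjoint x),
    exp_apply_apply_of_derivation (B := adCLM L) fun y z ↦
      (leibniz_lie x y z).trans (add_comm _ _)⟩

theorem eventually_exists_eq_exp_adCLM : ∀ᶠ g : L →L[ℝ] L in 𝓝 1,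
    (∀ x y, g ⁅x, y⁆ = ⁅g x, g y⁆) → ∃ z, g = exp (adCLM L z) := by
  have hmap := (hasStrictFDerivAt_exp_zero (𝕂 := ℝ) (𝔸 := L →L[ℝ] L)).map_nhds_eq_of_surj
    (LinearMap.range_eq_top.2 Function.surjective_id)
  rw [exp_zero] at hmap
  rw [← hmap, eventually_map]
  filter_upwards [eventually_derivation_of_exp_apply_apply (adCLM L)] with D hD hexp
  obtain ⟨z, hz⟩ := LieDerivation.IsKilling.exists_eq_ad
    (LieDerivation.mk D.toLinearMap fun x y ↦ by
      rw [← lie_skew y, sub_neg_eq_add]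
      exact hD hexp x y)
  have hDz : D = adCLM L z :=
    ContinuousLinearMap.ext fun x ↦ by simpa using (DFunLike.congr_fun hz x).symm
  exact ⟨z, congrArg exp hDz⟩

theorem engel_toSubmodule_eq_ker_adCLM (x : L) :
    (LieSubalgebra.engel ℝ x).toSubmodule = (adCLM L x).ker :=
  SetLike.ext fun _ ↦ mem_engel_iff_lie_eq_zero

theorem rank_le_finrank_ker_adCLM (x : L) : LieAlgebra.rank ℝ L ≤ finrank ℝ (adCLM L x).ker := by
  rw [← engel_toSubmodule_eq_ker_adCLM]
  exact LieAlgebra.rank_le_finrank_engel ℝ x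

theorem isRegular_iff_finrank_ker_adCLM_eq_rank {x : L} :
    LieAlgebra.IsRegular ℝ x ↔ finrank ℝ (adCLM L x).ker = LieAlgebra.rank ℝ L := by
  rw [← engel_toSubmodule_eq_ker_adCLM]
  exact LieAlgebra.isRegular_iff_finrank_engel_eq_rank ℝ x

theorem commute_adCLM {x y : L} (h : ⁅x, y⁆ = 0) : Commute (adCLM L x) (adCLM L y) :=
  ContinuousLinearMap.ext fun z ↦ by simp [leibniz_lie x y z, h]

theorem exists_mem_ker_adCLM_le {A : Submodule ℝ L}
    (hA : ∀ x ∈ A, ∀ y ∈ A, (⁅x, y⁆ : L) = 0) :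
    ∃ a ∈ A, ∀ b ∈ A, (adCLM L a).ker ≤ (adCLM L b).ker := by
  obtain ⟨a, ha, hmin⟩ := WellFounded.has_min
    (measure fun a : L ↦ finrank ℝ (adCLM L a).ker).wf A ⟨0, A.zero_mem⟩
  refine ⟨a, ha, fun b hb ↦ ?_⟩
  have hcont : Continuous fun t : ℝ ↦ t • adCLM L b := by fun_prop
  have hsmall := (hcont.tendsto' 0 0 (zero_smul _ _)).mono_left (nhdsWithin_le_nhds (s := {0}ᶜ))
  obtain ⟨t, hker, ht : t ≠ 0⟩ := ((hsmall.eventually (eventually_ker_add_le_of_isCompl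
    (isCompl_ker_range_adCLM a))).and self_mem_nhdsWithin).exists
  have hle := hker ((commute_adCLM (hA a ha b hb)).smul_right t)
  have hsum : adCLM L a + t • adCLM L b = adCLM L (a + t • b) := by simp
  rw [hsum] at hle
  have heq := Submodule.eq_of_le_of_finrank_le (hle.trans inf_le_left)
    (not_lt.1 (hmin _ (A.add_mem ha (A.smul_mem t hb))))
  intro x hx
  rw [← heq] at hx
  have htx : t • ⁅b, x⁆ = 0 := (hle hx).2
  exact (smul_eq_zero.1 htx).resolve_left ht

-- Hunt's argument: `g` maximises `⟪x, g y⟫` over the compact group of isometric automorphisms.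
theorem exists_mem_isometricAut_lie_eq_zero (x y : L) : ∃ g ∈ isometricAut L, ⁅x, g y⁆ = 0 := by
  obtain ⟨g, hg, hmax⟩ := isCompact_isometricAut.exists_isMaxOn ⟨1, one_mem (isometricAut L)⟩
    (f := fun g ↦ ⟪x, g y⟫) (by fun_prop)
  have hderiv (z : L) :
      HasDerivAt (fun t : ℝ ↦ ⟪x, exp (t • adCLM L z) (g y)⟫) ⟪x, ⁅z, g y⁆⟫ 0 := by
    simpa [exp_zero] using (hasDerivAt_const (0 : ℝ) x).inner ℝ
      ((hasDerivAt_exp_smul_const (adCLM L z) 0).clm_apply (hasDerivAt_const 0 (g y)))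
  have hcrit (z : L) : ⟪x, ⁅z, g y⁆⟫ = 0 := by
    refine IsLocalMax.hasDerivAt_eq_zero (Eventually.of_forall fun t ↦ ?_) (hderiv z)
    have hle : ⟪x, (exp (adCLM L (t • z)) * g) y⟫ ≤ ⟪x, g y⟫ :=
      hmax (mul_mem (exp_adCLM_mem_isometricAut _) hg)
    simpa [exp_zero] using hle
  have horth (z : L) : ⟪⁅x, g y⁆, z⟫ = 0 := by
    rw [← lie_skew, inner_neg_left, inner_lie_left, neg_neg, ← lie_skew, inner_neg_right, hcrit,
      neg_zero]
  exact ⟨g, hg, inner_self_eq_zero.1 (horth _)⟩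

theorem finrank_le_rank_of_isMaximalAbelianIn {A : Submodule ℝ L}
    (hA : IsMaximalAbelianIn A ⊤) : finrank ℝ A ≤ LieAlgebra.rank ℝ L := by
  obtain ⟨a, -, hker⟩ := exists_mem_ker_adCLM_le hA.lie_eq_zero
  obtain ⟨x, hx⟩ := LieAlgebra.exists_isRegular ℝ L
  obtain ⟨g, ⟨hunit, hlie⟩, hg⟩ := exists_mem_isometricAut_lie_eq_zero x a
  have hinj : Function.Injective g :=
    (AddMonoidHomClass.isometry_of_norm g (g.norm_map_of_mem_unitary hunit)).injective
  obtain ⟨y, rfl⟩ : ∃ y, g y = x := ⟨star g x, congr($(hunit.2) x)⟩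
  have hay : ⁅a, y⁆ = 0 := by
    rw [← hlie] at hg
    rw [← lie_skew, (map_eq_zero_iff g hinj).1 hg, neg_zero]
  have hyA : y ∈ A := (hA.mem_iff y trivial).2 fun b hb ↦ hker b hb hay
  have hle : A.map g.toLinearMap ≤ (adCLM L (g y)).ker := by
    rintro _ ⟨b, hb, rfl⟩
    change ⁅g y, g b⁆ = 0
    rw [← hlie, hA.lie_eq_zero y hyA b hb, map_zero]
  calc finrank ℝ A = finrank ℝ (A.map g.toLinearMap) :=
        (Submodule.equivMapOfInjective _ hinj A).finrank_eq
    _ ≤ finrank ℝ (adCLM L (g y)).ker := Submodule.finrank_mono hle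
    _ = LieAlgebra.rank ℝ L := isRegular_iff_finrank_ker_adCLM_eq_rank.1 hx

variable (L) in
/-- The monoid of inner automorphisms of `L`, generated by the exponentials of the adjoint
operators. -/
noncomputable def innerAut : Submonoid (L →L[ℝ] L) :=
  Submonoid.closure (Set.range fun x ↦ exp (adCLM L x))

theorem exp_adCLM_mem_innerAut (x : L) : exp (adCLM L x) ∈ innerAut L :=
  Submonoid.subset_closure ⟨x, rfl⟩

theorem innerAut_le_isometricAut : innerAut L ≤ isometricAut L := by
  rintro g hg
  refine Submonoid.closure_le.2 ?_ hg
  rintro _ ⟨x, rfl⟩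
  exact exp_adCLM_mem_isometricAut x

theorem exists_analyticAt_path_of_mem_innerAut {g : L →L[ℝ] L} (hg : g ∈ innerAut L) :
    ∃ T : ℝ → L →L[ℝ] L, (∀ t, AnalyticAt ℝ T t) ∧ (∀ t, T t ∈ innerAut L) ∧ T 0 = 1 ∧ T 1 = g := by
  induction hg using Submonoid.closure_induction with
  | mem _ h =>
    obtain ⟨x, rfl⟩ := h
    refine ⟨fun t ↦ exp (t • adCLM L x), fun t ↦ ?_, fun t ↦ ?_, by simp [exp_zero], by simp⟩
    · exact (exp_analytic (𝕂 := ℝ) _).comp (analyticAt_id.smul analyticAt_const)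
    · simpa using exp_adCLM_mem_innerAut (t • x)
  | one => exact ⟨fun _ ↦ 1, fun _ ↦ analyticAt_const, fun _ ↦ one_mem _, rfl, rfl⟩
  | mul g h _ _ ihg ihh =>
    obtain ⟨S, hS, hSmem, hS0, hS1⟩ := ihg
    obtain ⟨T, hT, hTmem, hT0, hT1⟩ := ihh
    exact ⟨fun t ↦ S t * T t, fun t ↦ (hS t).mul (hT t), fun t ↦ mul_mem (hSmem t) (hTmem t),
      by simp [hS0, hT0], by simp [hS1, hT1]⟩

-- Near `1` an inner automorphism is `exp (ad z)`, which fixes `ker (ad z)`; analyticity of the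
-- path from `1` to `g` propagates the resulting bound.
theorem rank_le_finrank_ker_sub_one {g : L →L[ℝ] L} (hg : g ∈ innerAut L) :
    LieAlgebra.rank ℝ L ≤ finrank ℝ (g - 1 : L →L[ℝ] L).ker := by
  obtain ⟨T, hT, hmem, hT0, rfl⟩ := exists_analyticAt_path_of_mem_innerAut hg
  refine le_finrank_ker_of_analytic_of_eventually_le (T := fun t ↦ T t - 1) (t₀ := 0)
    (fun t ↦ (hT t).sub analyticAt_const) ?_ 1
  have hnear : Tendsto T (𝓝 0) (𝓝 1) := hT0 ▸ (hT 0).continuousAt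
  filter_upwards [hnear.eventually eventually_exists_eq_exp_adCLM] with t ht
  obtain ⟨z, hz⟩ := ht (innerAut_le_isometricAut (hmem t)).2
  refine (rank_le_finrank_ker_adCLM z).trans (Submodule.finrank_mono fun x hx ↦ ?_)
  change T t x - x = 0
  rw [hz, exp_apply_eq_self hx, sub_self]

theorem exists_mem_innerAut_ker_sub_one_le {g : L →L[ℝ] L} (hg : g ∈ innerAut L) {a : L}
    (ha : g a = a) : ∃ h ∈ innerAut L,
      (h - 1 : L →L[ℝ] L).ker ≤ (g - 1 : L →L[ℝ] L).ker ⊓ (adCLM L a).ker := by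
  obtain ⟨hunit, hlie⟩ := innerAut_le_isometricAut hg
  have hnormal := isStarNormal_sub_one (isStarNormal_of_mem_unitary hunit)
  have hsmall : Tendsto (fun D : L →L[ℝ] L ↦ 1 - exp D) (𝓝 0) (𝓝 0) :=
    (continuous_const.sub exp_continuous).tendsto' 0 0 (by simp [exp_zero])
  have hcont : Continuous fun t : ℝ ↦ adCLM L (t • a) := by fun_prop
  have hzero := (hcont.tendsto' 0 0 (by simp)).mono_left (nhdsWithin_le_nhds (s := {0}ᶜ))
  obtain ⟨t, ⟨hker, hexp⟩, ht : t ≠ 0⟩ := (((hzero.eventually ((hsmall.eventually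
    (eventually_ker_add_le_of_isCompl (isCompl_ker_range_of_isStarNormal hnormal))).and
    eventually_apply_eq_zero_of_exp_apply_eq_self))).and self_mem_nhdsWithin).exists
  set D := adCLM L (t • a) with hD
  have hcomm : Commute g D := ContinuousLinearMap.ext fun x ↦ by simp [hD, hlie, ha]
  have hsub : Commute (g - 1) (1 - exp D) :=
    ((Commute.one_right g).sub_right hcomm.exp_right).sub_left (.one_left _)
  refine ⟨exp (-D) * g, mul_mem ?_ hg, fun x hx ↦ ?_⟩
  · rw [hD, ← map_neg]
    exact exp_adCLM_mem_innerAut _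
  have hfix : exp (-D) (g x) = x := sub_eq_zero.1 hx
  have hgx : g x = exp D x := by rw [← exp_apply_exp_neg_apply D (g x), hfix]
  obtain ⟨hgker, hDker⟩ := hker hsub (x := x) (by simp [hgx])
  have hDx : t • ⁅a, x⁆ = 0 := by
    rw [← smul_lie]
    exact hexp x (sub_eq_zero.1 hDker).symm
  exact ⟨hgker, (smul_eq_zero.1 hDx).resolve_left ht⟩

theorem exists_isRegular_ker_adCLM_le {g : L →L[ℝ] L} (hg : g ∈ innerAut L) :
    ∃ a : L, LieAlgebra.IsRegular ℝ a ∧ (adCLM L a).ker ≤ (g - 1 : L →L[ℝ] L).ker := by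
  obtain ⟨A, -, hA⟩ := exists_isMaximalAbelianIn (A₀ := ⊥) (V := (g - 1 : L →L[ℝ] L).ker) bot_le
    (by simp)
  obtain ⟨A', hle, hA'⟩ := exists_isMaximalAbelianIn le_top hA.lie_eq_zero
  obtain ⟨a, ha, hgen⟩ := exists_mem_ker_adCLM_le hA.lie_eq_zero
  obtain ⟨h, hh, hker⟩ := exists_mem_innerAut_ker_sub_one_le hg (sub_eq_zero.1 (hA.le ha))
  have hhA : (h - 1 : L →L[ℝ] L).ker ≤ A := fun x hx ↦
    (hA.mem_iff x (hker hx).1).2 fun b hb ↦ hgen b hb (hker hx).2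
  have hrank : LieAlgebra.rank ℝ L ≤ finrank ℝ A :=
    (rank_le_finrank_ker_sub_one hh).trans (Submodule.finrank_mono hhA)
  obtain rfl : A = A' :=
    Submodule.eq_of_le_of_finrank_le hle ((finrank_le_rank_of_isMaximalAbelianIn hA').trans hrank)
  have haA : (adCLM L a).ker ≤ A := fun x hx ↦ (hA'.mem_iff x trivial).2 fun b hb ↦ hgen b hb hx
  refine ⟨a, isRegular_iff_finrank_ker_adCLM_eq_rank.2 (le_antisymm ?_
    (rank_le_finrank_ker_adCLM a)), haA.trans hA.le⟩
  exact (Submodule.finrank_mono haA).trans (finrank_le_rank_of_isMaximalAbelianIn hA')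

theorem range_sub_one_le_range_adCLM {g : L →L[ℝ] L} (hg : g ∈ innerAut L) {a : L}
    (hker : (adCLM L a).ker ≤ (g - 1 : L →L[ℝ] L).ker) :
    (g - 1 : L →L[ℝ] L).range ≤ (adCLM L a).range := by
  have hnormal := isStarNormal_sub_one (isStarNormal_of_mem_unitary (innerAut_le_isometricAut hg).1)
  rw [← orthogonal_ker_adCLM, ← orthogonal_ker_of_isStarNormal hnormal]
  exact Submodule.orthogonal_le hker

end FiniteDimensional

/-- `u, v` are unit vectors such that every element of `C` maps each of the two lines they span into
the other one. The vector `⁅u, v⁆` then represents a root on `C`, possibly zero; if it is a nonzero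
element of `C`, then `u, v` is an orthonormal basis of a root plane. -/
structure IsRootPair (C : Submodule ℝ L) (u v : L) : Prop where
  norm_left : ‖u‖ = 1
  norm_right : ‖v‖ = 1
  lie_left_mem : ∀ d ∈ C, ⁅d, u⁆ ∈ ℝ ∙ v
  lie_right_mem : ∀ d ∈ C, ⁅d, v⁆ ∈ ℝ ∙ u

namespace IsRootPair

variable {C : Submodule ℝ L} {u v : L}

theorem symm (h : IsRootPair C u v) : IsRootPair C v u :=
  ⟨h.norm_right, h.norm_left, h.lie_right_mem, h.lie_left_mem⟩

theorem lie_left (h : IsRootPair C u v) {d : L} (hd : d ∈ C) : ⁅d, u⁆ = ⟪⁅u, v⁆, d⟫ • v := by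
  obtain ⟨r, hr⟩ := Submodule.mem_span_singleton.1 (h.lie_left_mem d hd)
  have hroot : ⟪⁅u, v⁆, d⟫ = r := by
    rw [inner_lie_left, ← lie_skew, inner_neg_right, neg_neg, ← hr, real_inner_smul_right,
      real_inner_self_eq_norm_sq, h.norm_right, one_pow, mul_one]
  rw [hroot, hr]

theorem lie_right (h : IsRootPair C u v) {d : L} (hd : d ∈ C) : ⁅d, v⁆ = -⟪⁅u, v⁆, d⟫ • u := by
  rw [h.symm.lie_left hd, ← lie_skew, inner_neg_left]

theorem lie_mem (h : IsRootPair C u v) (hC : IsMaximalAbelianIn C ⊤) : ⁅u, v⁆ ∈ C := by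
  refine (hC.mem_iff _ trivial).2 fun d hd ↦ ?_
  rw [leibniz_lie, h.lie_left hd, h.lie_right hd]
  simp

variable [FiniteDimensional ℝ L]

-- The half turn in the plane spanned by `⁅u, v⁆` and `v` reverses `⁅u, v⁆`.
theorem exp_adCLM_apply_eq_reflection (h : IsRootPair C u v) (huv : ⁅u, v⁆ ∈ C)
    (h0 : ⁅u, v⁆ ≠ 0) {c : L} (hc : c ∈ C) :
    exp (adCLM L ((Real.pi / ‖⁅u, v⁆‖) • u)) c = (ℝ ∙ ⁅u, v⁆)ᗮ.reflection c := by
  have hnorm : ‖⁅u, v⁆‖ ≠ 0 := norm_ne_zero_iff.2 h0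
  have hlie {d : L} (hd : d ∈ C) : ⁅u, d⁆ = -⟪⁅u, v⁆, d⟫ • v := by
    rw [← lie_skew, h.lie_left hd, neg_smul]
  set r := ⁅u, v⁆ with hr
  have hturn : exp (adCLM L ((Real.pi / ‖r‖) • u)) r = -r := by
    rw [map_smul]
    refine exp_pi_div_smul_apply_eq_neg hnorm ?_
    rw [adCLM_apply, adCLM_apply, hlie huv, lie_smul, ← hr, real_inner_self_eq_norm_sq]
  set β := ⟪r, c⟫ / ‖r‖ ^ 2 with hβ
  have hmem : c - β • r ∈ C := C.sub_mem hc (C.smul_mem β huv)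
  have horth : ⟪r, c - β • r⟫ = 0 := by
    rw [inner_sub_right, real_inner_smul_right, real_inner_self_eq_norm_sq, hβ]
    field_simp
    ring
  have hfix : exp (adCLM L ((Real.pi / ‖r‖) • u)) (c - β • r) = c - β • r :=
    exp_apply_eq_self (by rw [adCLM_apply, smul_lie, hlie hmem, horth]; simp)
  rw [reflection_orthogonal_singleton_apply, ← hβ]
  rw [map_sub, map_smul (exp _), hturn] at hfix
  rw [sub_eq_iff_eq_add.1 hfix]
  module

end IsRootPair

variable [FiniteDimensional ℝ L]

theorem eq_zero_of_forall_lie_eq_zero {x : L} (hx : ∀ y : L, ⁅x, y⁆ = 0) : x = 0 := by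
  have hcenter : x ∈ LieAlgebra.center ℝ L := (LieModule.mem_maxTrivSubmodule ..).2 fun y ↦ by
    rw [← lie_skew, hx, neg_zero]
  rwa [LieAlgebra.center_eq_bot, LieSubmodule.mem_bot] at hcenter

theorem exists_forall_lie_lie_eq_smul {C : Submodule ℝ L} (hC : ∀ x ∈ C, ∀ y ∈ C, (⁅x, y⁆ : L) = 0)
    {c : L} (hc : c ∈ C) (hc0 : c ≠ 0) :
    ∃ u : L, ⁅c, u⁆ ≠ 0 ∧ ∀ d ∈ C, ∃ r : ℝ, ⁅c, ⁅d, u⁆⁆ = r • u := by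
  have hcomm {x y : L} (hx : x ∈ C) (hy : y ∈ C) := commute_adCLM (hC x hx y hy)
  let T (d : C) : L →ₗ[ℝ] L := (adCLM L c * adCLM L d).toLinearMap
  have hsymm (d : C) : (T d).IsSymmetric := fun x y ↦ by
    change ⟪⁅c, ⁅(d : L), x⁆⁆, y⟫ = ⟪x, ⁅c, ⁅(d : L), y⁆⁆⟫
    rw [inner_lie_left, inner_lie_left, neg_neg]
    exact congr(⟪x, $((hcomm d.2 hc).eq) y⟫)
  have hTcomm : Pairwise (Function.onFun Commute T) := fun d e _ ↦ by
    have h : Commute (adCLM L c * adCLM L d) (adCLM L c * adCLM L e) :=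
      ((hcomm hc hc).mul_right (hcomm hc e.2)).mul_left ((hcomm d.2 hc).mul_right (hcomm d.2 e.2))
    exact congrArg ContinuousLinearMap.toLinearMap h.eq
  by_contra! hker
  refine hc0 (eq_zero_of_forall_lie_eq_zero fun x ↦ ?_)
  suffices hle : (⊤ : Submodule ℝ L) ≤ (adCLM L c).ker from hle (x := x) trivial
  rw [← LinearMap.IsSymmetric.iSup_iInf_eq_top_of_commute hsymm hTcomm]
  refine iSup_le fun χ u hu ↦ ?_
  rw [Submodule.mem_iInf] at hu
  by_contra hcu
  obtain ⟨d, hd, hne⟩ := hker u hcu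
  exact hne _ (Module.End.mem_eigenspace_iff.1 (hu ⟨d, hd⟩))

theorem exists_isRootPair {C : Submodule ℝ L} (hC : ∀ x ∈ C, ∀ y ∈ C, (⁅x, y⁆ : L) = 0)
    {c : L} (hc : c ∈ C) (hc0 : c ≠ 0) : ∃ u v : L, IsRootPair C u v ∧ ⁅c, u⁆ ≠ 0 := by
  obtain ⟨u, hu, heig⟩ := exists_forall_lie_lie_eq_smul hC hc hc0
  have hcomm {d : L} (hd : d ∈ C) (x : L) : ⁅c, ⁅d, x⁆⁆ = ⁅d, ⁅c, x⁆⁆ :=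
    congr($((commute_adCLM (hC c hc d hd)).eq) x)
  obtain ⟨m, hm⟩ := heig c hc
  have hm0 : m ≠ 0 := by
    rintro rfl
    exact hu (lie_eq_zero_of_lie_lie_eq_zero (hm.trans (zero_smul ℝ u)))
  have hleft {d : L} (hd : d ∈ C) : ⁅d, u⁆ ∈ ℝ ∙ ⁅c, u⁆ := by
    obtain ⟨r, hr⟩ := heig d hd
    have h : m • ⁅d, u⁆ = r • ⁅c, u⁆ := by
      rw [← lie_smul, ← hm, ← hcomm hd, ← hcomm hd, hr, lie_smul]
    exact Submodule.mem_span_singleton.2 ⟨m⁻¹ * r, by rw [mul_smul, ← h, inv_smul_smul₀ hm0]⟩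
  have hright {d : L} (hd : d ∈ C) : ⁅d, ⁅c, u⁆⁆ ∈ ℝ ∙ u := by
    obtain ⟨r, hr⟩ := heig d hd
    exact Submodule.mem_span_singleton.2 ⟨r, by rw [← hcomm hd, hr]⟩
  have hu0 : u ≠ 0 := by
    rintro rfl
    exact hu (lie_zero c)
  refine ⟨‖u‖⁻¹ • u, ‖⁅c, u⁆‖⁻¹ • ⁅c, u⁆, ⟨norm_smul_inv_norm hu0, norm_smul_inv_norm hu,
    fun d hd ↦ ?_, fun d hd ↦ ?_⟩, ?_⟩
  · rw [lie_smul, Submodule.span_singleton_smul_eq (.mk0 _ (by simpa using hu))]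
    exact Submodule.smul_mem _ _ (hleft hd)
  · rw [lie_smul, Submodule.span_singleton_smul_eq (.mk0 _ (by simpa using hu0))]
    exact Submodule.smul_mem _ _ (hright hd)
  · rw [lie_smul]
    exact smul_ne_zero (by simpa using hu0) hu

theorem exists_mem_innerAut_le_range_sub_one {C : Submodule ℝ L} (hC : IsMaximalAbelianIn C ⊤) :
    ∃ g ∈ innerAut L, C ≤ (g - 1 : L →L[ℝ] L).range := by
  refine exists_mem_le_range_sub_one
    (S := {h | h ∈ C ∧ ∃ r ∈ innerAut L, ∀ c ∈ C, r c = (ℝ ∙ h)ᗮ.reflection c})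
    (fun h hh ↦ hh.1) (fun h hh ↦ hh.2) fun c hc hc0 ↦ ?_
  obtain ⟨u, v, huv, hcu⟩ := exists_isRootPair hC.lie_eq_zero hc hc0
  have hinner : ⟪⁅u, v⁆, c⟫ ≠ 0 := fun h ↦ hcu (by rw [huv.lie_left hc, h, zero_smul])
  have h0 : ⁅u, v⁆ ≠ 0 := fun h ↦ hinner (by rw [h, inner_zero_left])
  have hmem := huv.lie_mem hC
  exact ⟨⁅u, v⁆, ⟨hmem, _, exp_adCLM_mem_innerAut _,
    fun d hd ↦ huv.exp_adCLM_apply_eq_reflection hmem h0 hd⟩, hinner⟩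

end IsCompactSemisimple

theorem cartan_subset_ad_range_general {L : Type*} [LieRing L] [LieAlgebra ℝ L]
    [FiniteDimensional ℝ L] [IsCompactSemisimple L] (C : LieSubalgebra ℝ L) [IsLieAbelian C] :
    ∃ a : L, LieAlgebra.IsRegular ℝ a ∧ ∀ c ∈ C, ∃ y : L, c = ⁅a, y⁆ := by
  have habelian : ∀ x ∈ C.toSubmodule, ∀ y ∈ C.toSubmodule, ⁅x, y⁆ = 0 := fun x hx y hy ↦
    congrArg Subtype.val (trivial_lie_zero C C ⟨x, hx⟩ ⟨y, hy⟩)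
  obtain ⟨A, hCA, hA⟩ := exists_isMaximalAbelianIn le_top habelian
  obtain ⟨g, hg, hAg⟩ := IsCompactSemisimple.exists_mem_innerAut_le_range_sub_one hA
  obtain ⟨a, ha, hker⟩ := IsCompactSemisimple.exists_isRegular_ker_adCLM_le hg
  refine ⟨a, ha, fun c hc ↦ ?_⟩
  obtain ⟨y, hy⟩ := IsCompactSemisimple.range_sub_one_le_range_adCLM hg hker (hAg (hCA hc))
  exact ⟨y, hy.symm⟩

/-- In a compact semisimple real Lie algebra, for every Cartan subalgebra `C` there is a
regular element `a` with `C ⊆ [a, L]`. -/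
theorem cartan_subset_ad_range (L : Type*) [LieRing L] [LieAlgebra ℝ L] [FiniteDimensional ℝ L]
    (hneg : ∀ x : L, x ≠ 0 → killingForm ℝ L x x < 0)
    (C : LieSubalgebra ℝ L) (hC : C.IsCartanSubalgebra) :
    ∃ a : L, LieAlgebra.IsRegular ℝ a ∧ ∀ c ∈ C, ∃ y : L, c = ⁅a, y⁆ := by
  have : IsCompactSemisimple L := ⟨hneg⟩
  exact cartan_subset_ad_range_general C
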